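/- arXiv:1407.0043 — 14 statements merged into one kernel-verified Lean document; each statement's English description precedes it below -/
import Mathlib

section
/- Every proper edge-coloring of the complete bipartite graph K_{2,4} contains a multicolored cycle of length 4. -/
/-!
Fix the vertex `0` of the part of size 4. A vertex `j ≠ 0` spans with it a 4-cycle that fails to be
rainbow only if `c 0 0 = c 1 j` or `c 1 0 = c 0 j`, since properness separates all other pairs of
edges. The colors at each vertex of the part of size 2 are distinct, so each of these equations
holds for at most one `j`. As there are three candidates for `j`, one of them gives a rainbow cycle.
-/

/-- A proper edge-coloring of the complete bipartite graph with partite sets `V` and `W`: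
edges are pairs `(v, w)`, the coloring is `c`, and edges sharing a vertex get distinct colors. -/
def ProperColoring {V W α : Type*} (c : V → W → α) : Prop :=
  (∀ v : V, Function.Injective fun w => c v w) ∧
  (∀ w : W, Function.Injective fun v => c v w)

/-- The edge-colored complete bipartite graph (with parts `V`, `W` and coloring `c`) contains a
multicolored (rainbow) cycle of length `2 * k`: there are distinct vertices
`a 0, …, a (k-1)` in `V` and `b 0, …, b (k-1)` in `W` forming the cycle
`a 0 - b 0 - a 1 - b 1 - ⋯ - a (k-1) - b (k-1) - a 0`, whose `2k` edges
(`a i - b i` and `a (i+1) - b i`, indices mod `k`) receive pairwise distinct colors. -/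
def HasRainbowCycle2k {V W α : Type*} (k : ℕ) (c : V → W → α) : Prop :=
  ∃ (a : ZMod k → V) (b : ZMod k → W),
    Function.Injective a ∧ Function.Injective b ∧
    Function.Injective (fun p : ZMod k × Bool =>
      if p.2 then c (a p.1) (b p.1) else c (a (p.1 + 1)) (b p.1))

/-- The pigeonhole step: some `j ≠ 0` avoids both color coincidences that could spoil the 4-cycle
through the vertices `0` and `j` of the part of size 4. -/
theorem exists_good_vertex {α : Type*} (c : Fin 2 → Fin 4 → α) (hc : ProperColoring c) :
    ∃ j : Fin 4, j ≠ 0 ∧ c 0 0 ≠ c 1 j ∧ c 1 0 ≠ c 0 j := by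
  by_contra! h
  have hx : ∀ i j : Fin 4, c 0 i = c 0 j → i = j := fun i j e => hc.1 0 e
  have hy : ∀ i j : Fin 4, c 1 i = c 1 j → i = j := fun i j e => hc.1 1 e
  have h1 := or_iff_not_imp_left.2 (h 1 (by decide))
  have h2 := or_iff_not_imp_left.2 (h 2 (by decide))
  have h3 := or_iff_not_imp_left.2 (h 3 (by decide))
  have x12 : c 0 1 ≠ c 0 2 := fun e => absurd (hx _ _ e) (by decide)
  have x13 : c 0 1 ≠ c 0 3 := fun e => absurd (hx _ _ e) (by decide)
  have x23 : c 0 2 ≠ c 0 3 := fun e => absurd (hx _ _ e) (by decide)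
  have y12 : c 1 1 ≠ c 1 2 := fun e => absurd (hy _ _ e) (by decide)
  have y13 : c 1 1 ≠ c 1 3 := fun e => absurd (hy _ _ e) (by decide)
  have y23 : c 1 2 ≠ c 1 3 := fun e => absurd (hy _ _ e) (by decide)
  clear h hx hy hc
  grind

/-- Every proper edge-coloring of `K_{2,4}` contains a multicolored cycle of length 4. -/
theorem stmt_0 {α : Type*} (c : Fin 2 → Fin 4 → α) (hc : ProperColoring c) :
    HasRainbowCycle2k 2 c := by
  obtain ⟨j, hj, h1, h2⟩ := exists_good_vertex c hc
  have x : c 0 0 ≠ c 0 j := fun e => hj (hc.1 0 e).symm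
  have y : c 1 0 ≠ c 1 j := fun e => hj (hc.1 1 e).symm
  have z0 : c 0 0 ≠ c 1 0 := fun e => absurd (hc.2 0 e) (by decide)
  have zj : c 0 j ≠ c 1 j := fun e => absurd (hc.2 j e) (by decide)
  -- `ZMod 2` is definitionally `Fin 2`, so vectors of length 2 serve as the vertex sequences.
  refine ⟨(![0, 1] : Fin 2 → Fin 2), (![0, j] : Fin 2 → Fin 4), ?_, ?_, ?_⟩
  · change Function.Injective (![0, 1] : Fin 2 → Fin 2)
    decide
  · change Function.Injective (![0, j] : Fin 2 → Fin 4)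
    intro p q
    fin_cases p <;> fin_cases q <;> simp [hj, hj.symm]
  · -- In `Fin 2` the successor of `1` is `0`, which closes the cycle.
    have hs : (1 : Fin 2) + 1 = 0 := rfl
    change Function.Injective (fun p : Fin 2 × Bool =>
      if p.2 then c ((![0, 1] : Fin 2 → Fin 2) p.1) ((![0, j] : Fin 2 → Fin 4) p.1)
      else c ((![0, 1] : Fin 2 → Fin 2) (p.1 + 1)) ((![0, j] : Fin 2 → Fin 4) p.1))
    rintro ⟨p, s⟩ ⟨q, t⟩
    fin_cases p <;> fin_cases q <;> cases s <;> cases t <;>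
      simp [hs, x, y, z0, zj, h1, h2, x.symm, y.symm, z0.symm, zj.symm, h1.symm, h2.symm]
end

section
/- FMC(4) is empty: for all integers m, n with 2 ≤ m ≤ n and n ≥ 4, every proper edge-coloring of K_{m,n} using at most n colors contains a multicolored cycle of length 4. -/
/-- `FMC(4) = ∅`: for all `2 ≤ m ≤ n` with `n ≥ 4`, every proper edge-coloring of `K_{m,n}`
using at most `n` colors contains a multicolored 4-cycle. -/
theorem stmt_1 (m n : ℕ) (hm : 2 ≤ m) (hmn : m ≤ n) (hn : 4 ≤ n)
    (c : Fin m → Fin n → Fin n) (hc : ProperColoring c) :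
    HasRainbowCycle2k 2 c := by
  obtain ⟨hrow, hcol⟩ := hc
  let u : Fin m := ⟨0, by omega⟩
  let v : Fin m := ⟨1, by omega⟩
  let i : Fin n := ⟨0, by omega⟩
  have huv : u ≠ v := by simp [u, v]
  obtain ⟨j₁, hj₁⟩ := Finite.surjective_of_injective (hrow u) (c v i)
  obtain ⟨j₂, hj₂⟩ := Finite.surjective_of_injective (hrow v) (c u i)
  obtain ⟨j, hj⟩ : ∃ j, j ∉ ({i, j₁, j₂} : Finset (Fin n)) := by
    by_contra! h
    have h3 : ({i, j₁, j₂} : Finset (Fin n)).card ≤ 3 := Finset.card_le_three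
    rw [Finset.eq_univ_of_forall h, Finset.card_univ, Fintype.card_fin] at h3
    omega
  simp only [Finset.mem_insert, Finset.mem_singleton, not_or] at hj
  obtain ⟨hji, hjj₁, hjj₂⟩ := hj
  have e1 : c u i ≠ c v i := fun h => huv (hcol i h)
  have e2 : c u j ≠ c v j := fun h => huv (hcol j h)
  have e3 : c u j ≠ c u i := fun h => hji (hrow u h)
  have e4 : c v j ≠ c v i := fun h => hji (hrow v h)
  have e5 : c u j ≠ c v i := fun h => hjj₁ (hrow u (h.trans hj₁.symm))
  have e6 : c v j ≠ c u i := fun h => hjj₂ (hrow v (h.trans hj₂.symm))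
  -- `ZMod 2` unfolds to `Fin 2`, so vectors of length two serve as the vertex maps.
  have a11 : (1 : Fin 2) + 1 = 0 := rfl
  refine ⟨(![u, v] : Fin 2 → Fin m), (![i, j] : Fin 2 → Fin n), ?_, ?_, ?_⟩
  · change Function.Injective (![u, v] : Fin 2 → Fin m)
    intro x y h
    fin_cases x <;> fin_cases y <;> simp_all
  · change Function.Injective (![i, j] : Fin 2 → Fin n)
    intro x y h
    fin_cases x <;> fin_cases y <;> simp_all
  · change Function.Injective (fun p : Fin 2 × Bool =>
      if p.2 then c ((![u, v] : Fin 2 → Fin m) p.1) ((![i, j] : Fin 2 → Fin n) p.1)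
      else c ((![u, v] : Fin 2 → Fin m) (p.1 + 1)) ((![i, j] : Fin 2 → Fin n) p.1))
    rintro ⟨x, s⟩ ⟨y, t⟩ h
    clear_value u v i
    clear hrow hcol hj₁ hj₂
    fin_cases x <;> fin_cases y <;> cases s <;> cases t <;>
      simp [a11, e1, e2, e3, e4, e5, e6, e1.symm, e2.symm, e3.symm, e4.symm, e5.symm,
        e6.symm] at h ⊢
end

section
/- If k ≥ 3 is odd, then for every integer m with k ≤ m ≤ 2k, there exists a proper edge-coloring of K_{m,2k} using at most 2k colors that contains no multicolored cycle of length 2k (i.e., (m,2k) ∈ FMC(2k)). -/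
theorem sum_colors_parity (k : ℕ) : ∑ i ∈ Finset.range (2 * k), (i : ZMod 2) = k := by
  induction k with
  | zero => simp
  | succ n ih =>
    rw [show 2 * (n + 1) = 2 * n + 1 + 1 by ring, Finset.sum_range_succ, Finset.sum_range_succ, ih]
    have h2 : (2 : ZMod 2) = 0 := rfl
    push_cast
    linear_combination (2 * (n : ZMod 2)) * h2

/-- Reduction modulo the even number `2 * k` preserves parity. -/
theorem cast_mod_two_mul (k n : ℕ) : ((n % (2 * k) : ℕ) : ZMod 2) = n := by
  rw [ZMod.natCast_eq_natCast_iff]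
  exact Nat.mod_mod_of_dvd n (Dvd.intro k rfl)

/-- If `k ≥ 3` is odd, then for every `k ≤ m ≤ 2k` there is a proper edge-coloring of
`K_{m,2k}` using at most `2k` colors with no multicolored cycle of length `2k`. -/
theorem stmt_2 (k m : ℕ) (hk3 : 3 ≤ k) (hkodd : Odd k) (hkm : k ≤ m) (hm2k : m ≤ 2 * k) :
    ∃ c : Fin m → Fin (2 * k) → Fin (2 * k),
      ProperColoring c ∧ ¬ HasRainbowCycle2k k c := by
  have hpos : 0 < 2 * k := by omega
  have : NeZero k := ⟨by omega⟩
  refine ⟨fun v w => ⟨(v.val + w.val) % (2 * k), Nat.mod_lt _ hpos⟩, ⟨?_, ?_⟩, ?_⟩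
  · intro v w w' h
    have h' : v.val + w.val ≡ v.val + w'.val [MOD 2 * k] := congrArg Fin.val h
    exact Fin.ext ((Nat.ModEq.add_left_cancel' _ h').eq_of_lt_of_lt w.isLt w'.isLt)
  · intro w v v' h
    have h' : v.val + w.val ≡ v'.val + w.val [MOD 2 * k] := congrArg Fin.val h
    exact Fin.ext ((Nat.ModEq.add_right_cancel' _ h').eq_of_lt_of_lt
      (by omega) (by omega))
  · rintro ⟨a, b, -, -, hinj⟩
    -- There are as many edges on the cycle as colors, so each color occurs exactly once.
    have hbij := (Fintype.bijective_iff_injective_and_card _).2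
      ⟨hinj, by simp [ZMod.card, mul_comm]⟩
    have hsum := hbij.sum_comp (fun i : Fin (2 * k) => ((i : ℕ) : ZMod 2))
    rw [Fin.sum_univ_eq_sum_range (fun i : ℕ => (i : ZMod 2)), sum_colors_parity,
      Fintype.sum_prod_type] at hsum
    simp only [Fintype.sum_bool, if_true, Bool.false_eq_true, if_false, cast_mod_two_mul,
      Nat.cast_add, Finset.sum_add_distrib] at hsum
    -- The edges `a (i + 1) - b i` contribute the same vertex sum as the edges `a i - b i`.
    have hshift := Equiv.sum_comp (Equiv.addRight (1 : ZMod k)) (fun i => ((a i : ℕ) : ZMod 2))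
    simp only [Equiv.coe_addRight] at hshift
    rw [hshift, CharTwo.add_self_eq_zero] at hsum
    have heven := (ZMod.natCast_eq_zero_iff k 2).1 hsum.symm
    exact (Nat.not_even_iff_odd.2 hkodd) (even_iff_two_dvd.2 heven)
end

section
/- Let k ≥ 3 be odd and let M : Fin k × Fin k → Fin k be any latin square of order k. Color the complete bipartite graph whose two partite sets are both indexed by (ℤ/2ℤ) × Fin k by giving the edge joining (a,x) in one side to (b,y) in the other side the color (a+b, M(x,y)) ∈ (ℤ/2ℤ) × Fin k. Then this edge-coloring is proper, uses 2k colors, and contains no multicolored cycle of length 2k. -/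
/-- For odd `k ≥ 3` and any latin square `M` of order `k`, the coloring of the complete
bipartite graph with both parts `(ℤ/2ℤ) × Fin k` giving edge `(a,x)(b,y)` the color
`(a + b, M x y)` is proper, uses all `2k` colors, and has no multicolored `2k`-cycle. -/
theorem stmt_3 (k : ℕ) (hk3 : 3 ≤ k) (hkodd : Odd k) (M : Fin k → Fin k → Fin k)
    (hMrow : ∀ x : Fin k, Function.Injective fun y => M x y)
    (hMcol : ∀ y : Fin k, Function.Injective fun x => M x y) :
    ProperColoring (fun (u v : ZMod 2 × Fin k) => (u.1 + v.1, M u.2 v.2)) ∧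
    Set.range (fun p : (ZMod 2 × Fin k) × (ZMod 2 × Fin k) =>
      (p.1.1 + p.2.1, M p.1.2 p.2.2)) = Set.univ ∧
    Fintype.card (ZMod 2 × Fin k) = 2 * k ∧
    ¬ HasRainbowCycle2k k (fun (u v : ZMod 2 × Fin k) => (u.1 + v.1, M u.2 v.2)) := by
  have : NeZero k := ⟨by omega⟩
  refine ⟨⟨?_, ?_⟩, ?_, ?_, ?_⟩
  · rintro ⟨a, x⟩ ⟨b, y⟩ ⟨b', y'⟩ h
    simp only [Prod.mk.injEq, add_right_inj] at h
    exact Prod.ext h.1 (hMrow x h.2)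
  · rintro ⟨b, y⟩ ⟨a, x⟩ ⟨a', x'⟩ h
    simp only [Prod.mk.injEq, add_left_inj] at h
    exact Prod.ext h.1 (hMcol y h.2)
  · rw [Set.range_eq_univ]
    rintro ⟨e, z⟩
    obtain ⟨y, hy⟩ := Finite.surjective_of_injective (hMrow 0) z
    exact ⟨((e, 0), (0, y)), by simpa using hy⟩
  · simp [ZMod.card]
  · rintro ⟨a, b, -, -, hinj⟩
    -- The `2k` edges have distinct colors among `2k`, so every color occurs exactly once.
    have hbij := (Fintype.bijective_iff_injective_and_card _).2
      ⟨hinj, by simp [ZMod.card, mul_comm]⟩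
    have hsum := hbij.sum_comp (fun q : ZMod 2 × Fin k => q.1)
    have hshift : ∑ i : ZMod k, (a (i + 1)).1 = ∑ i, (a i).1 :=
      Equiv.sum_comp (Equiv.addRight (1 : ZMod k)) fun i => (a i).1
    have hcolors : ∑ q : ZMod 2 × Fin k, q.1 = 1 := by
      have h2 : ∑ e : ZMod 2, e = 1 := by decide
      have hk1 : (k : ZMod 2) = 1 := ZMod.natCast_eq_one_iff_odd.2 hkodd
      simp [Fintype.sum_prod_type, h2, hk1]
    have hedges : ∑ p : ZMod k × Bool,
        (if p.2 then ((a p.1).1 + (b p.1).1, M (a p.1).2 (b p.1).2)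
          else ((a (p.1 + 1)).1 + (b p.1).1, M (a (p.1 + 1)).2 (b p.1).2)).1 = 0 := by
      simp only [Fintype.sum_prod_type, Fintype.sum_bool, if_true, Bool.false_eq_true, if_false,
        Finset.sum_add_distrib, hshift]
      exact CharTwo.add_self_eq_zero _
    rw [hcolors] at hsum
    exact zero_ne_one (hedges.symm.trans hsum)
end

section
/- For every integer k ≥ 2 and every integer n ≥ 5k − 6, every proper edge-coloring of K_{k,n} using at most n colors contains a multicolored cycle of length 2k. -/
/-- The row of index `i` modulo `k`, so that row `k` is row `0` again. -/
def cycRow (k : ℕ) (hk : 2 ≤ k) (i : ℕ) : Fin k := ⟨i % k, Nat.mod_lt _ (by omega)⟩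

lemma cycRow_ne_succ (k : ℕ) (hk : 2 ≤ k) (j : ℕ) (hj : j < k) :
    cycRow k hk j ≠ cycRow k hk (j + 1) := by
  intro h
  have h' : j % k = (j + 1) % k := congrArg Fin.val h
  rw [Nat.mod_eq_of_lt hj] at h'
  rcases Nat.lt_or_ge (j + 1) k with h1 | h1
  · rw [Nat.mod_eq_of_lt h1] at h'
    omega
  · have h2 : j + 1 = k := by omega
    rw [h2, Nat.mod_self] at h'
    omega

/-- The color of the edge of the walk with index `p`: `(i, true)` is the edge from row `i` to
column `b i`, and `(i, false)` is the edge from column `b i` to row `i + 1`. -/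
def walkColor {k n : ℕ} (hk : 2 ≤ k) (c : Fin k → Fin n → Fin n) (b : ℕ → Fin n)
    (p : ℕ × Bool) : Fin n :=
  if p.2 then c (cycRow k hk p.1) (b p.1) else c (cycRow k hk (p.1 + 1)) (b p.1)

/-- The first `j` columns of `b` are distinct and the first `2 * j` edges of the walk are
rainbow. -/
def IsRainbowWalk {k n : ℕ} (hk : 2 ≤ k) (c : Fin k → Fin n → Fin n) (b : ℕ → Fin n)
    (j : ℕ) : Prop :=
  (∀ i < j, ∀ i' < j, b i = b i' → i = i') ∧
  (∀ p q : ℕ × Bool, p.1 < j → q.1 < j → walkColor hk c b p = walkColor hk c b q → p = q)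

/-- The colors of the first `2 * j` edges of the walk. -/
def walkColors {k n : ℕ} (hk : 2 ≤ k) (c : Fin k → Fin n → Fin n) (b : ℕ → Fin n)
    (j : ℕ) : Finset (Fin n) :=
  (Finset.range j ×ˢ (Finset.univ : Finset Bool)).image (walkColor hk c b)

lemma mem_walkColors {k n : ℕ} (hk : 2 ≤ k) (c : Fin k → Fin n → Fin n) (b : ℕ → Fin n)
    (j : ℕ) (p : ℕ × Bool) (hp : p.1 < j) : walkColor hk c b p ∈ walkColors hk c b j :=
  Finset.mem_image_of_mem _ (by simp [hp])

lemma card_walkColors_le {k n : ℕ} (hk : 2 ≤ k) (c : Fin k → Fin n → Fin n) (b : ℕ → Fin n)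
    (j : ℕ) : (walkColors hk c b j).card ≤ 2 * j := by
  refine Finset.card_image_le.trans ?_
  simp [mul_comm]

lemma exists_avoiding {k n : ℕ} (c : Fin k → Fin n → Fin n) (hc : ProperColoring c)
    (u v : Fin k) (B C D : Finset (Fin n)) (h : B.card + C.card + D.card < n) :
    ∃ w, w ∉ B ∧ c u w ∉ C ∧ c v w ∉ D := by
  have hpre : ∀ (x : Fin k) (E : Finset (Fin n)),
      (Finset.univ.filter fun w => c x w ∈ E).card ≤ E.card := fun x E =>
    Finset.card_le_card_of_injOn (c x) (fun w hw => by simpa using hw) (hc.1 x).injOn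
  have hlt : (B ∪ (Finset.univ.filter fun w => c u w ∈ C) ∪
      (Finset.univ.filter fun w => c v w ∈ D)).card < (Finset.univ : Finset (Fin n)).card := by
    have h1 := Finset.card_union_le (B ∪ (Finset.univ.filter fun w => c u w ∈ C))
      (Finset.univ.filter fun w => c v w ∈ D)
    have h2 := Finset.card_union_le B (Finset.univ.filter fun w => c u w ∈ C)
    have h3 := hpre u C
    have h4 := hpre v D
    rw [Finset.card_univ, Fintype.card_fin]
    omega
  obtain ⟨w, -, hw⟩ := Finset.exists_mem_notMem_of_card_lt_card hlt
  simp only [Finset.mem_union, Finset.mem_filter, Finset.mem_univ, true_and, not_or] at hw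
  exact ⟨w, hw.1.1, hw.1.2, hw.2⟩

lemma IsRainbowWalk.extend {k n : ℕ} (hk : 2 ≤ k) (c : Fin k → Fin n → Fin n)
    (hc : ProperColoring c) (b : ℕ → Fin n) (j : ℕ) (hj : j < k) (hb : IsRainbowWalk hk c b j)
    (w : Fin n) (hw : ∀ i < j, w ≠ b i)
    (h1 : c (cycRow k hk j) w ∉ walkColors hk c b j)
    (h2 : c (cycRow k hk (j + 1)) w ∉ walkColors hk c b j) :
    IsRainbowWalk hk c (Function.update b j w) (j + 1) := by
  have hold : ∀ i < j, Function.update b j w i = b i := fun i hi =>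
    Function.update_of_ne (by omega) _ _
  have hnew : Function.update b j w j = w := Function.update_self _ _ _
  have hcold : ∀ p : ℕ × Bool, p.1 < j →
      walkColor hk c (Function.update b j w) p ∈ walkColors hk c b j ∧
      walkColor hk c (Function.update b j w) p = walkColor hk c b p := by
    intro p hp
    have : walkColor hk c (Function.update b j w) p = walkColor hk c b p := by
      simp only [walkColor, hold _ hp]
    exact ⟨this ▸ mem_walkColors hk c b j p hp, this⟩
  have hcnew : ∀ s : Bool,
      walkColor hk c (Function.update b j w) (j, s) ∉ walkColors hk c b j := by
    intro s
    cases s <;> simpa [walkColor]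
  have hne : c (cycRow k hk j) w ≠ c (cycRow k hk (j + 1)) w := fun h =>
    cycRow_ne_succ k hk j hj (hc.2 w h)
  refine ⟨fun i hi i' hi' h => ?_, ?_⟩
  · rcases Nat.lt_succ_iff_lt_or_eq.1 hi with hi | rfl <;>
      rcases Nat.lt_succ_iff_lt_or_eq.1 hi' with hi' | rfl
    · rw [hold i hi, hold i' hi'] at h
      exact hb.1 i hi i' hi' h
    · rw [hold i hi, hnew] at h
      exact absurd h.symm (hw i hi)
    · rw [hold i' hi', hnew] at h
      exact absurd h (hw i' hi')
    · rfl
  · rintro ⟨i, s⟩ ⟨i', s'⟩ hi hi' h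
    rcases Nat.lt_succ_iff_lt_or_eq.1 hi with hi | rfl <;>
      rcases Nat.lt_succ_iff_lt_or_eq.1 hi' with hi' | hi'
    · rw [(hcold _ hi).2, (hcold _ hi').2] at h
      exact hb.2 _ _ hi hi' h
    · dsimp only at hi'
      subst hi'
      exact absurd (h ▸ (hcold _ hi).1) (hcnew s')
    · exact absurd (h ▸ (hcold _ hi').1) (hcnew s)
    · dsimp only at hi'
      subst hi'
      cases s <;> cases s' <;> simp [walkColor] at h ⊢
      · exact hne h.symm
      · exact hne h

/-- All columns but the last can be chosen without the refined count. -/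
lemma exists_isRainbowWalk {k n : ℕ} (hk : 2 ≤ k) (hn : 5 * k - 6 ≤ n)
    (c : Fin k → Fin n → Fin n) (hc : ProperColoring c) (j : ℕ) (hj : j + 1 ≤ k) :
    ∃ b, IsRainbowWalk hk c b j := by
  induction j with
  | zero =>
    exact ⟨fun _ => ⟨0, by omega⟩, fun i hi => by omega, fun p q hp => by omega⟩
  | succ j ih =>
    obtain ⟨b, hb⟩ := ih (by omega)
    have hC := card_walkColors_le hk c b j
    have hB : ((Finset.range j).image b).card ≤ j := by
      simpa using Finset.card_image_le (s := Finset.range j) (f := b)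
    obtain ⟨w, hw, h1, h2⟩ := exists_avoiding c hc (cycRow k hk j) (cycRow k hk (j + 1))
      ((Finset.range j).image b) (walkColors hk c b j) (walkColors hk c b j) (by omega)
    refine ⟨_, hb.extend hk c hc b j (by omega) w (fun i hi h => hw ?_) h1 h2⟩
    exact h ▸ Finset.mem_image_of_mem b (Finset.mem_range.2 hi)

/-- The last column, returning to row `0`; this is where the bound `5 * k - 6` is used in full. -/
lemma exists_isRainbowWalk_full {k n : ℕ} (hk : 2 ≤ k) (hn : 5 * k - 6 ≤ n)
    (c : Fin k → Fin n → Fin n) (hc : ProperColoring c) :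
    ∃ b, IsRainbowWalk hk c b k := by
  obtain ⟨m, rfl⟩ : ∃ m, k = m + 2 := ⟨k - 2, by omega⟩
  obtain ⟨b, hb⟩ := exists_isRainbowWalk hk hn c hc (m + 1) (by omega)
  have hC := card_walkColors_le hk c b (m + 1)
  have hB : ((Finset.range (m + 1)).image b).card ≤ m + 1 := by
    simpa using Finset.card_image_le (s := Finset.range (m + 1)) (f := b)
  have hm1 : c (cycRow (m + 2) hk (m + 1)) (b m) ∈ walkColors hk c b (m + 1) :=
    mem_walkColors hk c b (m + 1) (m, false) (Nat.lt_succ_self m)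
  have hrow : cycRow (m + 2) hk (m + 1 + 1) = cycRow (m + 2) hk 0 := by
    simp [cycRow]
  have hm2 : c (cycRow (m + 2) hk (m + 1 + 1)) (b 0) ∈ walkColors hk c b (m + 1) := by
    rw [hrow]
    exact mem_walkColors hk c b (m + 1) (0, true) (Nat.succ_pos m)
  have hE1 := Finset.card_erase_of_mem hm1
  have hE2 := Finset.card_erase_of_mem hm2
  have hpos := Finset.card_pos.2 ⟨_, hm1⟩
  obtain ⟨w, hw, h1, h2⟩ := exists_avoiding c hc (cycRow (m + 2) hk (m + 1))
    (cycRow (m + 2) hk (m + 1 + 1)) ((Finset.range (m + 1)).image b)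
    ((walkColors hk c b (m + 1)).erase (c (cycRow (m + 2) hk (m + 1)) (b m)))
    ((walkColors hk c b (m + 1)).erase (c (cycRow (m + 2) hk (m + 1 + 1)) (b 0))) (by omega)
  have hw' : ∀ i < m + 1, w ≠ b i := fun i hi h =>
    hw (h ▸ Finset.mem_image_of_mem b (Finset.mem_range.2 hi))
  refine ⟨_, hb.extend hk c hc b (m + 1) (by omega) w hw' (fun h => h1 ?_) (fun h => h2 ?_)⟩
  -- The erased colors cannot occur at `w`, which differs from the columns `b m` and `b 0`.
  · exact Finset.mem_erase.2 ⟨fun e => hw' m (by omega) (hc.1 _ e), h⟩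
  · exact Finset.mem_erase.2 ⟨fun e => hw' 0 (by omega) (hc.1 _ e), h⟩

/-- For `k ≥ 2` and `n ≥ 5k - 6`, every proper edge-coloring of `K_{k,n}` using at most `n`
colors contains a multicolored cycle of length `2k`. -/
theorem stmt_4 (k n : ℕ) (hk : 2 ≤ k) (hn : 5 * k - 6 ≤ n)
    (c : Fin k → Fin n → Fin n) (hc : ProperColoring c) :
    HasRainbowCycle2k k c := by
  obtain ⟨b, hb1, hb2⟩ := exists_isRainbowWalk_full hk hn c hc
  have : NeZero k := ⟨by omega⟩
  have : Fact (1 < k) := ⟨by omega⟩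
  have hsucc : ∀ i : ZMod k, cycRow k hk (i + 1).val = cycRow k hk (i.val + 1) := by
    intro i
    simp [cycRow, ZMod.val_add, ZMod.val_one]
  refine ⟨fun i => cycRow k hk i.val, fun i => b i.val, ?_, ?_, ?_⟩
  · intro i i' h
    have h' : i.val % k = i'.val % k := congrArg Fin.val h
    rw [Nat.mod_eq_of_lt i.val_lt, Nat.mod_eq_of_lt i'.val_lt] at h'
    exact ZMod.val_injective k h'
  · intro i i' h
    exact ZMod.val_injective k (hb1 _ i.val_lt _ i'.val_lt h)
  · rintro ⟨i, s⟩ ⟨i', s'⟩ h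
    simp only [hsucc] at h
    have h' := hb2 (i.val, s) (i'.val, s') i.val_lt i'.val_lt h
    rw [Prod.mk.injEq] at h' ⊢
    exact ⟨ZMod.val_injective k h'.1, h'.2⟩
end

section
/- Let k ≥ 2 and n ≥ 5k − 6, and let K_{k,n} have partite sets A of size k and B of size n. In every proper edge-coloring of K_{k,n} using at most n colors, there exists a multicolored path of length 2k − 2 whose both endpoints lie in A (equivalently, a multicolored path visiting all k vertices of A). -/
/-- The color of the edge joining the `i`-th chosen vertex `b i` of `B` to the `i`-th (`true`) or
`(i+1)`-st (`false`) vertex of `A`, where the vertices of `A` are indexed by natural numbers. -/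
def edgeColor {n : ℕ} (c : ℕ → Fin n → Fin n) (b : ℕ → Fin n) (p : ℕ × Bool) : Fin n :=
  if p.2 then c p.1 (b p.1) else c (p.1 + 1) (b p.1)

/-- If `5m < n`, some vertex outside the `m` used ones has edges to the `m`-th and `(m+1)`-st
vertices of `A` that avoid the at most `2m` used colors. -/
lemma exists_extension {n m : ℕ} (c : ℕ → Fin n → Fin n) (b : ℕ → Fin n)
    (h₀ : Function.Injective (c m)) (h₁ : Function.Injective (c (m + 1))) (hm : 5 * m < n) :
    ∃ w : Fin n, (∀ i < m, b i ≠ w) ∧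
      ∀ i < m, ∀ s, edgeColor c b (i, s) ≠ c m w ∧ edgeColor c b (i, s) ≠ c (m + 1) w := by
  classical
  set F : Finset (Fin n) :=
    (Finset.range m ×ˢ (Finset.univ : Finset Bool)).image (edgeColor c b) with hF
  have hFc : F.card ≤ 2 * m := by
    refine Finset.card_image_le.trans ?_
    simp [mul_comm]
  have hpre : ∀ g : Fin n → Fin n, Function.Injective g →
      (Finset.univ.filter fun w => g w ∈ F).card ≤ 2 * m := fun g hg =>
    (Finset.card_le_card_of_injOn g (fun w hw => by simpa using hw) hg.injOn).trans hFc
  have hb : ((Finset.range m).image b).card ≤ m := Finset.card_image_le.trans (by simp)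
  set bad : Finset (Fin n) := (Finset.range m).image b ∪
    ((Finset.univ.filter fun w => c m w ∈ F) ∪ (Finset.univ.filter fun w => c (m + 1) w ∈ F))
    with hbad
  have hcard : bad.card < (Finset.univ : Finset (Fin n)).card := by
    have h1 := Finset.card_union_le ((Finset.range m).image b)
      ((Finset.univ.filter fun w => c m w ∈ F) ∪ (Finset.univ.filter fun w => c (m + 1) w ∈ F))
    have h2 := Finset.card_union_le (Finset.univ.filter fun w => c m w ∈ F)
      (Finset.univ.filter fun w => c (m + 1) w ∈ F)
    have h3 := hpre _ h₀
    have h4 := hpre _ h₁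
    rw [Finset.card_univ, Fintype.card_fin, hbad]
    omega
  obtain ⟨w, -, hw⟩ := Finset.exists_mem_notMem_of_card_lt_card hcard
  have hmemF : ∀ i < m, ∀ s, edgeColor c b (i, s) ∈ F := fun i hi s =>
    Finset.mem_image_of_mem _ (by simp [hi])
  simp only [hbad, Finset.mem_union, Finset.mem_filter, Finset.mem_univ, true_and, not_or] at hw
  obtain ⟨hwb, hw0, hw1⟩ := hw
  refine ⟨w, fun i hi h => hwb (h ▸ Finset.mem_image_of_mem b (by simpa using hi)),
    fun i hi s => ⟨fun h => hw0 (h ▸ hmemF i hi s), fun h => hw1 (h ▸ hmemF i hi s)⟩⟩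

/-- Iterating the extension step gives rainbow paths with `m` interior vertices in `B`, for every
`m < k`. Only the first `m` values of `b` matter. -/
lemma exists_path {k n : ℕ} (hn : 5 * k - 6 ≤ n) (hk : 2 ≤ k) (c : ℕ → Fin n → Fin n)
    (hrow : ∀ i < k, Function.Injective (c i))
    (hcol : ∀ i, i + 1 < k → ∀ w, c i w ≠ c (i + 1) w) (m : ℕ) (hm : m < k) :
    ∃ b : ℕ → Fin n, (∀ i < m, ∀ j < m, b i = b j → i = j) ∧
      ∀ i < m, ∀ j < m, ∀ s t, edgeColor c b (i, s) = edgeColor c b (j, t) → i = j ∧ s = t := by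
  induction m with
  | zero => exact ⟨fun _ => ⟨0, by omega⟩, by simp, by simp⟩
  | succ m ih =>
    obtain ⟨b, hb, hcb⟩ := ih (by omega)
    obtain ⟨w, hwb, hwc⟩ :=
      exists_extension c b (hrow m (by omega)) (hrow (m + 1) hm) (by omega)
    have hold : ∀ i < m, Function.update b m w i = b i := fun i hi =>
      Function.update_of_ne hi.ne _ _
    have holdc : ∀ i < m, ∀ s,
        edgeColor c (Function.update b m w) (i, s) = edgeColor c b (i, s) := fun i hi s => by
      simp [edgeColor, hold i hi]
    have hnewc : ∀ s, edgeColor c (Function.update b m w) (m, s)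
        = if s then c m w else c (m + 1) w := fun s => by simp [edgeColor]
    -- A new edge never repeats the color of an old one.
    have hsep : ∀ i < m, ∀ s t, edgeColor c (Function.update b m w) (i, s)
        ≠ edgeColor c (Function.update b m w) (m, t) := fun i hi s t => by
      rw [holdc i hi, hnewc]
      cases t
      · exact (hwc i hi s).2
      · exact (hwc i hi s).1
    refine ⟨Function.update b m w, fun i hi j hj h => ?_, fun i hi j hj s t h => ?_⟩
    · rcases Nat.lt_succ_iff_lt_or_eq.mp hi with hi | hi <;>
        rcases Nat.lt_succ_iff_lt_or_eq.mp hj with hj | hj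
      · exact hb i hi j hj (by rwa [hold i hi, hold j hj] at h)
      · exact absurd (by simpa [hold i hi, hj] using h) (hwb i hi)
      · exact absurd (by simpa [hold j hj, hi] using h.symm) (hwb j hj)
      · exact hi.trans hj.symm
    · rcases Nat.lt_succ_iff_lt_or_eq.mp hi with hi | hi <;>
        rcases Nat.lt_succ_iff_lt_or_eq.mp hj with hj | hj
      · exact hcb i hi j hj s t (by rwa [holdc i hi, holdc j hj] at h)
      · exact absurd (hj ▸ h) (hsep i hi s t)
      · exact absurd (hi ▸ h.symm) (hsep j hj t s)
      · have hne := hcol m hm w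
        rw [hi, hj, hnewc, hnewc] at h
        refine ⟨hi.trans hj.symm, ?_⟩
        cases s <;> cases t
        · rfl
        · exact absurd h.symm hne
        · exact absurd h hne
        · rfl

/-- For `k ≥ 2` and `n ≥ 5k - 6`, every proper edge-coloring of `K_{k,n}` using at most `n`
colors contains a multicolored path of length `2k - 2` with both endpoints in the part `A`
of size `k`: a path `a 0 - b 0 - a 1 - b 1 - ⋯ - b (k-2) - a (k-1)` visiting all `k`
vertices of `A`, whose `2k - 2` edges receive pairwise distinct colors. -/
theorem stmt_5 (k n : ℕ) (hk : 2 ≤ k) (hn : 5 * k - 6 ≤ n)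
    (c : Fin k → Fin n → Fin n) (hc : ProperColoring c) :
    ∃ (a : Fin k → Fin k) (b : Fin (k - 1) → Fin n),
      Function.Injective a ∧ Function.Injective b ∧
      Function.Injective (fun p : Fin (k - 1) × Bool =>
        if p.2 then c (a ⟨p.1.1, by have := p.1.isLt; omega⟩) (b p.1)
        else c (a ⟨p.1.1 + 1, by have := p.1.isLt; omega⟩) (b p.1)) := by
  -- Extend the coloring to all natural indices; the values at indices `≥ k` are irrelevant.
  have hc' : ∀ i (hi : i < k) w,
      (fun i w => if h : i < k then c ⟨i, h⟩ w else w : ℕ → Fin n → Fin n) i w = c ⟨i, hi⟩ w :=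
    fun i hi w => dif_pos hi
  set c' : ℕ → Fin n → Fin n := fun i w => if h : i < k then c ⟨i, h⟩ w else w
  obtain ⟨b, hb, hcb⟩ := exists_path hn hk c'
    (fun i hi x y h => hc.1 ⟨i, hi⟩ (by simpa only [hc' i hi] using h))
    (fun i hi w h => by
      rw [hc' i (by omega), hc' (i + 1) hi] at h
      have := congrArg Fin.val (hc.2 w h)
      simp at this)
    (k - 1) (by omega)
  refine ⟨id, fun i => b i, Function.injective_id,
    fun i j h => Fin.ext (hb i i.2 j j.2 h), ?_⟩
  rintro ⟨i, s⟩ ⟨j, t⟩ h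
  have key : ∀ (i : Fin (k - 1)) (s : Bool), edgeColor c' b (i, s) =
      if s then c ⟨i, by omega⟩ (b i) else c ⟨i + 1, by omega⟩ (b i) := fun i s => by
    simp only [edgeColor]
    rw [hc' i (by omega), hc' (i + 1) (by omega)]
  obtain ⟨hij, hst⟩ := hcb i i.2 j j.2 s t (by rw [key, key]; exact h)
  exact Prod.ext (Fin.ext hij) hst
end

section
/- Let L be a partial latin square of order 3 (a 3×3 array with entries pairwise distinct in each row and each column) whose size |L| is 7, i.e., exactly 7 distinct symbols appear in L. Then the corresponding proper edge-coloring of K_{3,3} contains no multicolored cycle of length 6 if and only if L contains a latin subsquare of order 2. -/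
/-!
A 6-cycle in `K_{3,3}` is the complement of a perfect matching, so a multicolored 6-cycle exists
iff `L` is injective off the graph of some permutation `σ` of `Fin 3`
(`hasRainbowCycle_iff`); that is, iff some `σ` meets every repetition of a symbol.

A latin subsquare repeats two symbols on the four cells where two rows meet two columns; two cells
of it with different symbols share a row or a column, so no `σ` meets both repetitions.

Conversely, if exactly 7 symbols fill the 9 cells, then `L` is injective off two cells `x`, `y`,
whose symbols also occur at cells `x'`, `y'` (`exists_repeated_cells`). If `x' = y'`, one symbol
occurs three times and a permutation through `x` and `y` works. Otherwise a permutation through one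
of `x, x'` and one of `y, y'` is needed, and it exists unless each of `x, x'` is in line with each
of `y, y'`, in which case the four cells form a latin subsquare (`transversal_or_square`).
-/

/-- In `K_{3,3}` a multicolored 6-cycle is the same thing as a perfect matching, given as a
permutation `σ`, off which all colors are distinct. -/
theorem hasRainbowCycle_iff {α : Type*} (L : Fin 3 → Fin 3 → α) :
    HasRainbowCycle2k 3 L ↔ ∃ σ : Equiv.Perm (Fin 3),
      ∀ z w : Fin 3 × Fin 3, z.2 ≠ σ z.1 → w.2 ≠ σ w.1 → L z.1 z.2 = L w.1 w.2 → z = w := by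
  constructor
  · rintro ⟨a, b, ha, hb, h⟩
    have ha' : Function.Bijective a := Finite.injective_iff_bijective.mp ha
    have hb' : Function.Bijective b := Finite.injective_iff_bijective.mp hb
    let A : ZMod 3 ≃ Fin 3 := Equiv.ofBijective a ha'
    let B : ZMod 3 ≃ Fin 3 := Equiv.ofBijective b (Finite.injective_iff_bijective.mp hb)
    -- The cycle joins `a k` to `b k` and `b (k - 1)`; the omitted edge at `a k` goes to `b (k + 1)`.
    refine ⟨(A.symm.trans (Equiv.addRight 1)).trans B, ?_⟩
    have key : ∀ z : Fin 3 × Fin 3, z.2 ≠ ((A.symm.trans (Equiv.addRight 1)).trans B) z.1 →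
        ∃ p : ZMod 3 × Bool, z = if p.2 then (a p.1, b p.1) else (a (p.1 + 1), b p.1) := by
      rintro ⟨i, j⟩ hz
      obtain ⟨k, rfl⟩ := ha'.2 i
      obtain ⟨l, rfl⟩ := hb'.2 j
      have hk : A.symm (a k) = k := A.symm_apply_apply k
      have hl : l ≠ k + 1 := by
        rintro rfl
        apply hz
        simp only [Equiv.trans_apply, hk]
        rfl
      have : ∀ k l : ZMod 3, l ≠ k + 1 → l = k ∨ k = l + 1 := by decide
      rcases this k l hl with rfl | rfl
      · exact ⟨(l, true), by simp⟩
      · exact ⟨(l, false), by simp⟩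
    intro z w hz hw hzw
    obtain ⟨p, rfl⟩ := key z hz
    obtain ⟨q, rfl⟩ := key w hw
    have hpq : p = q := by
      apply h
      rcases p with ⟨p, _ | _⟩ <;> rcases q with ⟨q, _ | _⟩ <;> simpa using hzw
    rw [hpq]
  · rintro ⟨σ, h⟩
    -- `ZMod 3` is definitionally `Fin 3`, so `σ` can be applied to it directly.
    let b : ZMod 3 → Fin 3 := fun x => σ (x - 1 : ZMod 3)
    have hb : ∀ x y : ZMod 3, b x = b y → x = y := by
      intro x y hxy
      exact sub_left_injective (σ.injective hxy)
    have hσ : ∀ x : ZMod 3, σ x = b (x + 1) := by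
      intro x
      simp [b]
    let a : ZMod 3 → Fin 3 := fun x => x
    have e1 : ∀ x : ZMod 3, b x ≠ σ (a x) := by
      intro x hx
      rw [show σ (a x) = b (x + 1) from hσ x] at hx
      have := hb _ _ hx
      clear hx
      revert x; decide
    have e2 : ∀ x : ZMod 3, b x ≠ σ (a (x + 1)) := by
      intro x hx
      rw [show σ (a (x + 1)) = b (x + 1 + 1) from hσ (x + 1)] at hx
      have := hb _ _ hx
      clear hx
      revert x; decide
    refine ⟨a, b, fun _ _ h => h, hb, ?_⟩
    have ne : ∀ x : ZMod 3, x ≠ x + 1 := by decide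
    rintro ⟨p, _ | _⟩ ⟨q, _ | _⟩ hpq
    · have := h (a (p + 1), b p) (a (q + 1), b q) (e2 p) (e2 q) (by simpa using hpq)
      rw [hb _ _ (Prod.ext_iff.mp this).2]
    · have := Prod.ext_iff.mp
        (h (a (p + 1), b p) (a q, b q) (e2 p) (e1 q) (by simpa using hpq))
      obtain rfl := hb _ _ this.2
      exact absurd this.1.symm (ne p)
    · have := Prod.ext_iff.mp
        (h (a p, b p) (a (q + 1), b q) (e1 p) (e2 q) (by simpa using hpq))
      obtain rfl := hb _ _ this.2
      exact absurd this.1 (ne p)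
    · have := h (a p, b p) (a q, b q) (e1 p) (e1 q) (by simpa using hpq)
      rw [hb _ _ (Prod.ext_iff.mp this).2]

/-- A function on 9 cells with 7 values is injective off two cells `x`, `y`, and the values at
these two are also taken elsewhere. -/
theorem exists_repeated_cells {α : Type*} (f : Fin 3 × Fin 3 → α)
    (h : (Set.range f).ncard = 7) :
    ∃ x y x' y' : Fin 3 × Fin 3, x ≠ y ∧ x' ≠ x ∧ x' ≠ y ∧ y' ≠ x ∧ y' ≠ y ∧
      f x' = f x ∧ f y' = f y ∧
      ∀ z w, z ≠ x → z ≠ y → w ≠ x → w ≠ y → f z = f w → z = w := by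
  obtain ⟨S, -, hS⟩ := Set.exists_subset_bijOn Set.univ f
  rw [Set.image_univ] at hS
  have hcard : S.ncard = 7 := by
    rw [← h, ← hS.image_eq, hS.injOn.ncard_image]
  have hc : Sᶜ.ncard = 2 := by
    have := Set.ncard_add_ncard_compl S
    rw [hcard, Nat.card_prod, Nat.card_fin] at this
    omega
  obtain ⟨x, y, hxy, hT⟩ := Set.ncard_eq_two.mp hc
  have hmem : ∀ z, z ∈ S ↔ z ≠ x ∧ z ≠ y := by
    intro z
    rw [← not_iff_not, ← Set.mem_compl_iff, hT]
    simp only [Set.mem_insert_iff, Set.mem_singleton_iff]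
    tauto
  obtain ⟨x', hx', ex⟩ := hS.surjOn (Set.mem_range_self x)
  obtain ⟨y', hy', ey⟩ := hS.surjOn (Set.mem_range_self y)
  rw [hmem] at hx' hy'
  exact ⟨x, y, x', y', hxy, hx'.1, hx'.2, hy'.1, hy'.2, ex, ey, fun z w h1 h2 h3 h4 =>
    fun e => hS.injOn ((hmem z).2 ⟨h1, h2⟩) ((hmem w).2 ⟨h3, h4⟩) e⟩

/-- Two cells in different rows and columns lie on a common permutation. -/
theorem exists_perm_through (p q : Fin 3 × Fin 3) (h1 : p.1 ≠ q.1) (h2 : p.2 ≠ q.2) :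
    ∃ σ : Equiv.Perm (Fin 3), σ p.1 = p.2 ∧ σ q.1 = q.2 := by
  revert p q; decide

/-- Given two disjoint pairs of cells, each pair in different rows and columns, either a permutation
meets both pairs or they are the two diagonals of a `2 × 2` square. -/
theorem transversal_or_square (x x' y y' : Fin 3 × Fin 3)
    (hx : x.1 ≠ x'.1 ∧ x.2 ≠ x'.2) (hy : y.1 ≠ y'.1 ∧ y.2 ≠ y'.2)
    (h1 : x ≠ y) (h2 : x ≠ y') (h3 : x' ≠ y) (h4 : x' ≠ y') :
    (∃ σ : Equiv.Perm (Fin 3), (σ x.1 = x.2 ∨ σ x'.1 = x'.2) ∧ (σ y.1 = y.2 ∨ σ y'.1 = y'.2)) ∨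
      (y = (x.1, x'.2) ∧ y' = (x'.1, x.2)) ∨ (y' = (x.1, x'.2) ∧ y = (x'.1, x.2)) := by
  by_cases a1 : x.1 ≠ y.1 ∧ x.2 ≠ y.2
  · obtain ⟨σ, s, t⟩ := exists_perm_through x y a1.1 a1.2
    exact Or.inl ⟨σ, Or.inl s, Or.inl t⟩
  by_cases a2 : x.1 ≠ y'.1 ∧ x.2 ≠ y'.2
  · obtain ⟨σ, s, t⟩ := exists_perm_through x y' a2.1 a2.2
    exact Or.inl ⟨σ, Or.inl s, Or.inr t⟩
  by_cases a3 : x'.1 ≠ y.1 ∧ x'.2 ≠ y.2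
  · obtain ⟨σ, s, t⟩ := exists_perm_through x' y a3.1 a3.2
    exact Or.inl ⟨σ, Or.inr s, Or.inl t⟩
  by_cases a4 : x'.1 ≠ y'.1 ∧ x'.2 ≠ y'.2
  · obtain ⟨σ, s, t⟩ := exists_perm_through x' y' a4.1 a4.2
    exact Or.inl ⟨σ, Or.inr s, Or.inr t⟩
  right
  obtain ⟨x1, x2⟩ := x
  obtain ⟨z1, z2⟩ := x'
  obtain ⟨y1, y2⟩ := y
  obtain ⟨w1, w2⟩ := y'
  simp only [Prod.mk.injEq, ne_eq] at *
  grind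

/-- Let `L` be a partial latin square of order 3 in which exactly 7 distinct symbols appear.
Then the corresponding proper edge-coloring of `K_{3,3}` has no multicolored 6-cycle
iff `L` contains a latin subsquare of order 2. -/
theorem stmt_6 {α : Type*} (L : Fin 3 → Fin 3 → α) (hL : ProperColoring L)
    (hsize : (Set.range fun p : Fin 3 × Fin 3 => L p.1 p.2).ncard = 7) :
    ¬ HasRainbowCycle2k 3 L ↔
      ∃ (i i' j j' : Fin 3), i ≠ i' ∧ j ≠ j' ∧ L i j = L i' j' ∧ L i j' = L i' j := by
  rw [hasRainbowCycle_iff]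
  constructor
  · intro hno
    obtain ⟨x, y, x', y', hxy, hx'x, hx'y, hy'x, hy'y, ex, ey, hinj⟩ :=
      exists_repeated_cells _ hsize
    -- Equal symbols at distinct cells lie in different rows and columns.
    have line : ∀ z w : Fin 3 × Fin 3, z ≠ w → L z.1 z.2 = L w.1 w.2 →
        z.1 ≠ w.1 ∧ z.2 ≠ w.2 := by
      rintro ⟨i, j⟩ ⟨i', j'⟩ hne h
      constructor
      · rintro rfl
        exact hne (congrArg _ (hL.1 i h))
      · rintro rfl
        exact hne (congrArg (fun t => (t, j)) (hL.2 j h))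
    by_cases hxy' : x' = y'
    · subst hxy'
      obtain ⟨h1, h2⟩ := line x y hxy (ex.symm.trans ey)
      -- The symbol at `x` occurs three times, and a permutation meeting two of its cells suffices.
      obtain ⟨σ, s, t⟩ := exists_perm_through x y h1 h2
      refine absurd ⟨σ, fun z w hz hw h => ?_⟩ hno
      exact hinj z w (by grind) (by grind) (by grind) (by grind) h
    · have hne : L x'.1 x'.2 ≠ L y'.1 y'.2 := fun h =>
        hxy' (hinj x' y' hx'x hx'y hy'x hy'y h)
      have hlx := line x x' hx'x.symm ex.symm
      have hly := line y y' hy'y.symm ey.symm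
      rcases transversal_or_square x x' y y' hlx hly hxy hy'x.symm hx'y hxy' with
        ⟨σ, s, t⟩ | ⟨rfl, rfl⟩ | ⟨rfl, rfl⟩
      · refine absurd ⟨σ, fun z w hz hw h => ?_⟩ hno
        have hX : ∀ w, w ≠ x → w ≠ y → L x.1 x.2 = L w.1 w.2 → w = x' := fun w h1 h2 e =>
          (hinj x' w hx'x hx'y h1 h2 (ex.trans e)).symm
        have hY : ∀ w, w ≠ x → w ≠ y → L y.1 y.2 = L w.1 w.2 → w = y' := fun w h1 h2 e =>
          (hinj y' w hy'x hy'y h1 h2 (ey.trans e)).symm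
        grind
      · exact ⟨x.1, x'.1, x.2, x'.2, hlx.1, hlx.2, ex.symm, ey.symm⟩
      · exact ⟨x.1, x'.1, x.2, x'.2, hlx.1, hlx.2, ex.symm, ey⟩
  · rintro ⟨i, i', j, j', hi, hj, h1, h2⟩ ⟨σ, h⟩
    -- `σ` meets both diagonals of the square, in two cells that share a row or a column.
    have m1 : σ i = j ∨ σ i' = j' := by
      by_contra! hc
      exact hi (congrArg Prod.fst (h (i, j) (i', j') hc.1.symm hc.2.symm h1))
    have m2 : σ i = j' ∨ σ i' = j := by
      by_contra! hc
      exact hi (congrArg Prod.fst (h (i, j') (i', j) hc.1.symm hc.2.symm h2))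
    have : σ i ≠ σ i' := fun e => hi (σ.injective e)
    grind
end

section
/- Let L be a partial latin square of order 3 whose size |L| is 6 (exactly 6 distinct symbols appear). If some symbol appears three times in L, then the corresponding proper edge-coloring of K_{3,3} contains no multicolored cycle of length 6. -/
/-- In the indexing of `HasRainbowCycle2k 3`, the cell `(u, v)` is on the cycle iff `u = v` or
`u = v + 1`. Two off-cycle cells and one cycle cell cannot lie in pairwise distinct columns and
pairwise distinct rows. -/
theorem no_transversal : ∀ u v u' v' x y : ZMod 3, ¬ (u = v ∨ u = v + 1) →
    ¬ (u' = v' ∨ u' = v' + 1) → (x = y ∨ x = y + 1) → v ≠ v' → v ≠ y → v' ≠ y →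
    u ≠ x → u' ≠ x → False := by
  have off : ∀ u v : ZMod 3, ¬ (u = v ∨ u = v + 1) → u = v + 2 := by decide
  have last : ∀ v v' y x : ZMod 3, v ≠ v' → v ≠ y → v' ≠ y → v + 2 ≠ x → v' + 2 ≠ x →
      x ≠ y ∧ x ≠ y + 1 := by decide
  intro u v u' v' x y hu hu' hx h1 h2 h3 h4 h5
  rw [off u v hu] at h4
  rw [off u' v' hu'] at h5
  obtain ⟨hx0, hx1⟩ := last v v' y x h1 h2 h3 h4 h5
  exact hx.elim hx0 hx1

/-- Let `L` be a partial latin square of order 3 in which exactly 6 distinct symbols appear.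
If some symbol appears three times in `L`, then the corresponding proper edge-coloring of
`K_{3,3}` has no multicolored 6-cycle. -/
theorem stmt_8 {α : Type*} (L : Fin 3 → Fin 3 → α) (hL : ProperColoring L)
    (hsize : (Set.range fun p : Fin 3 × Fin 3 => L p.1 p.2).ncard = 6)
    (hcond : ∃ s : α, {p : Fin 3 × Fin 3 | L p.1 p.2 = s}.ncard = 3) :
    ¬ HasRainbowCycle2k 3 L := by
  rintro ⟨a, b, ha, hb, hf⟩
  obtain ⟨s, hs⟩ := hcond
  have card3 : Nat.card (ZMod 3) = Nat.card (Fin 3) := by simp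
  have sa : Function.Surjective a := ((Nat.bijective_iff_injective_and_card a).2 ⟨ha, card3⟩).2
  have sb : Function.Surjective b := ((Nat.bijective_iff_injective_and_card b).2 ⟨hb, card3⟩).2
  set f : ZMod 3 × Bool → α := fun p =>
    if p.2 then L (a p.1) (b p.1) else L (a (p.1 + 1)) (b p.1) with hfdef
  -- The cycle already uses six colors, so it uses all of them.
  have hrange : Set.range f = Set.range fun p : Fin 3 × Fin 3 => L p.1 p.2 := by
    apply Set.eq_of_subset_of_ncard_le _ _ (Set.finite_range _)
    · rintro _ ⟨⟨i, e⟩, rfl⟩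
      cases e
      · exact ⟨(a (i + 1), b i), rfl⟩
      · exact ⟨(a i, b i), rfl⟩
    · rw [hsize, Set.ncard_range_of_injective hf]
      simp
  obtain ⟨p₀, hp₀⟩ : {p : Fin 3 × Fin 3 | L p.1 p.2 = s}.Nonempty := by
    apply Set.nonempty_of_ncard_ne_zero
    omega
  have hsf : s ∈ Set.range f := hrange ▸ ⟨p₀, hp₀⟩
  obtain ⟨x, y, hxy, hsxy, huniq⟩ : ∃ x y : ZMod 3, (x = y ∨ x = y + 1) ∧ L (a x) (b y) = s ∧
      ∀ u v, L (a u) (b v) = s → (u = v ∨ u = v + 1) → u = x ∧ v = y := by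
    have cell : ∀ u v : ZMod 3, (u = v ∨ u = v + 1) →
        ∃ e : Bool, u = (if e then v else v + 1) ∧ f (v, e) = L (a u) (b v) := by
      rintro u v (rfl | rfl)
      · exact ⟨true, by simp [hfdef]⟩
      · exact ⟨false, by simp [hfdef]⟩
    obtain ⟨⟨y, e⟩, hye⟩ := hsf
    refine ⟨if e then y else y + 1, y, by cases e <;> simp, ?_, ?_⟩
    · rw [← hye]
      cases e <;> simp [hfdef]
    · intro u v huv hc
      obtain ⟨e', hu, he'⟩ := cell u v hc
      have heq := hf (he'.trans (huv.trans hye.symm))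
      simp only [Prod.mk.injEq] at heq
      obtain ⟨rfl, rfl⟩ := heq
      exact ⟨hu, rfl⟩
  have h2 : ({p : Fin 3 × Fin 3 | L p.1 p.2 = s} \ {(a x, b y)}).ncard = 2 := by
    have hmem : (a x, b y) ∈ {p : Fin 3 × Fin 3 | L p.1 p.2 = s} := hsxy
    rw [Set.ncard_sdiff_singleton_of_mem hmem, hs]
  obtain ⟨p, q, hpq, hset⟩ := Set.ncard_eq_two.1 h2
  have hp : p ∈ {p : Fin 3 × Fin 3 | L p.1 p.2 = s} \ {(a x, b y)} := by simp [hset]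
  have hq : q ∈ {p : Fin 3 × Fin 3 | L p.1 p.2 = s} \ {(a x, b y)} := by simp [hset]
  obtain ⟨p1, p2⟩ := p
  obtain ⟨q1, q2⟩ := q
  obtain ⟨u, rfl⟩ := sa p1
  obtain ⟨v, rfl⟩ := sb p2
  obtain ⟨u', rfl⟩ := sa q1
  obtain ⟨v', rfl⟩ := sb q2
  obtain ⟨hps, hpne⟩ := hp
  obtain ⟨hqs, hqne⟩ := hq
  simp only [Set.mem_ofPred_eq] at hps hqs
  have col : ∀ i j k : ZMod 3, L (a i) (b k) = s → L (a j) (b k) = s → i = j :=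
    fun i j k h h' => ha (hL.2 (b k) (h.trans h'.symm))
  have row : ∀ i j k : ZMod 3, L (a k) (b i) = s → L (a k) (b j) = s → i = j :=
    fun i j k h h' => hb (hL.1 (a k) (h.trans h'.symm))
  refine no_transversal u v u' v' x y ?_ ?_ hxy ?_ ?_ ?_ ?_ ?_
  · intro h
    obtain ⟨rfl, rfl⟩ := huniq u v hps h
    exact hpne rfl
  · intro h
    obtain ⟨rfl, rfl⟩ := huniq u' v' hqs h
    exact hqne rfl
  · rintro rfl
    exact hpq (by rw [col u u' v hps hqs])
  · rintro rfl
    exact hpne (by rw [col u x v hps hsxy]; rfl)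
  · rintro rfl
    exact hqne (by rw [col u' x v' hqs hsxy]; rfl)
  · rintro rfl
    exact hpne (by rw [row v y u hps hsxy]; rfl)
  · rintro rfl
    exact hqne (by rw [row v' y u' hqs hsxy]; rfl)
end

section
/- Let L be a partial latin square of order 3 whose size |L| is 6 (exactly 6 distinct symbols appear). If L contains a latin subsquare of order 2, then the corresponding proper edge-coloring of K_{3,3} contains no multicolored cycle of length 6. -/
/-- Of two edges of the same color with distinct `b`-endpoints, one lies in the perfect matching
`a p - b (p + 1)` complementary to a multicolored hexagon. -/
lemma matching_of_color_eq {V W α : Type*} {c : V → W → α} {a : ZMod 3 → V} {b : ZMod 3 → W}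
    (hinj : Function.Injective (fun p : ZMod 3 × Bool =>
      if p.2 then c (a p.1) (b p.1) else c (a (p.1 + 1)) (b p.1)))
    {p p' q q' : ZMod 3} (hq : q ≠ q') (h : c (a p) (b q) = c (a p') (b q')) :
    q = p + 1 ∨ q' = p' + 1 := by
  by_contra! hne
  have key : ∀ x y : ZMod 3, y ≠ x + 1 → x = y ∨ x = y + 1 := by decide
  rcases key p q hne.1 with rfl | rfl <;> rcases key p' q' hne.2 with rfl | rfl
  · exact hq (congrArg Prod.fst (@hinj (p, true) (p', true) (by simpa using h)))
  · exact hq (congrArg Prod.fst (@hinj (p, true) (q', false) (by simpa using h)))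
  · exact hq (congrArg Prod.fst (@hinj (q, false) (p', true) (by simpa using h)))
  · exact hq (congrArg Prod.fst (@hinj (q, false) (q', false) (by simpa using h)))

/-- Let `L` be a partial latin square of order 3 in which exactly 6 distinct symbols appear.
If `L` contains a latin subsquare of order 2, then the corresponding proper edge-coloring of
`K_{3,3}` has no multicolored 6-cycle. -/
theorem stmt_9 {α : Type*} (L : Fin 3 → Fin 3 → α) (hL : ProperColoring L)
    (hsize : (Set.range fun p : Fin 3 × Fin 3 => L p.1 p.2).ncard = 6)
    (hcond : ∃ (i i' j j' : Fin 3), i ≠ i' ∧ j ≠ j' ∧ L i j = L i' j' ∧ L i j' = L i' j) :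
    ¬ HasRainbowCycle2k 3 L := by
  rintro ⟨a, b, ha, hb, hinj⟩
  obtain ⟨i, i', j, j', hi, hj, h₁, h₂⟩ := hcond
  have hcard : Fintype.card (ZMod 3) = Fintype.card (Fin 3) := by simp
  have hsa := ((Fintype.bijective_iff_injective_and_card a).2 ⟨ha, hcard⟩).surjective
  have hsb := ((Fintype.bijective_iff_injective_and_card b).2 ⟨hb, hcard⟩).surjective
  obtain ⟨p, rfl⟩ := hsa i
  obtain ⟨p', rfl⟩ := hsa i'
  obtain ⟨q, rfl⟩ := hsb j
  obtain ⟨q', rfl⟩ := hsb j'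
  have hp : p ≠ p' := fun h => hi (congrArg a h)
  have hq : q ≠ q' := fun h => hj (congrArg b h)
  rcases matching_of_color_eq hinj hq h₁ with e | e <;>
    rcases matching_of_color_eq hinj hq.symm h₂ with e' | e'
  · exact hq (e.trans e'.symm)
  · exact hp (add_right_cancel (e.symm.trans e'))
  · exact hp (add_right_cancel (e'.symm.trans e))
  · exact hq (e'.trans e.symm)
end

section
/- For every integer m with 3 ≤ m ≤ 8, there exists a proper edge-coloring of K_{m,8} using at most 8 colors that contains no multicolored cycle of length 6 (i.e., (m,8) ∈ FMC(6)). -/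
/-- Six distinct elements of `(ℤ/2)³` never sum to zero. -/
lemma sum_ne_zero_of_injective_six {ι : Type*} [Fintype ι] (hι : Fintype.card ι = 6)
    (f : ι → (Fin 3 → ZMod 2)) (hf : Function.Injective f) : ∑ i, f i ≠ 0 := by
  classical
  intro h0
  have hcard : ((Finset.univ.image f)ᶜ).card = 2 := by
    rw [Finset.card_compl, Finset.card_image_of_injective _ hf, Finset.card_univ, hι]
    simp [ZMod.card]
  obtain ⟨x, y, hxy, hs⟩ := Finset.card_eq_two.mp hcard
  have hsum := Finset.sum_add_sum_compl (Finset.univ.image f) (fun g => g)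
  have huniv : ∑ g : Fin 3 → ZMod 2, g = 0 := by decide
  rw [Finset.sum_image hf.injOn, h0, hs, Finset.sum_pair hxy, huniv, zero_add] at hsum
  apply hxy
  funext i
  exact CharTwo.add_eq_zero.mp (congrFun hsum i)

/-- For every `3 ≤ m ≤ 8`, there is a proper edge-coloring of `K_{m,8}` using at most 8
colors with no multicolored 6-cycle, i.e. `(m, 8) ∈ FMC(6)`. -/
theorem stmt_11 (m : ℕ) (hm3 : 3 ≤ m) (hm8 : m ≤ 8) :
    ∃ c : Fin m → Fin 8 → Fin 8, ProperColoring c ∧ ¬ HasRainbowCycle2k 3 c := by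
  have e : Fin 8 ≃ (Fin 3 → ZMod 2) := (Fintype.equivFinOfCardEq (by simp [ZMod.card])).symm
  refine ⟨fun v w => e.symm (e (Fin.castLE hm8 v) + e w), ⟨?_, ?_⟩, ?_⟩
  · intro v w w' h
    simpa using h
  · intro w v v' h
    simpa using h
  · rintro ⟨a, b, -, -, hinj⟩
    refine sum_ne_zero_of_injective_six (by simp [ZMod.card]) _ (e.injective.comp hinj) ?_
    have hshift : ∑ i : ZMod 3, e (Fin.castLE hm8 (a (i + 1)))
        = ∑ i : ZMod 3, e (Fin.castLE hm8 (a i)) :=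
      Equiv.sum_comp (Equiv.addRight (1 : ZMod 3)) (fun i => e (Fin.castLE hm8 (a i)))
    simp only [Fintype.sum_prod_type, Fintype.sum_bool, Function.comp_apply, if_true,
      Bool.false_eq_true, if_false, Equiv.apply_symm_apply, Finset.sum_add_distrib, hshift]
    funext i
    exact CharTwo.add_self_eq_zero (R := ZMod 2) _
end

section
/- Consider the complete bipartite graph whose two partite sets are both indexed by the group (ℤ/2ℤ)³, and color the edge joining u in one side to v in the other side with the color u + v ∈ (ℤ/2ℤ)³. Then this is a proper edge-coloring of K_{8,8} using 8 colors, and it contains no multicolored cycle of length 6. -/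
theorem sum_cycle_colors {k : ℕ} [NeZero k] (a b : ZMod k → ZMod 2 × ZMod 2 × ZMod 2) :
    ∑ p : ZMod k × Bool,
      (if p.2 then a p.1 + b p.1 else a (p.1 + 1) + b p.1) = 0 := by
  have hshift : ∑ i, a (i + 1) = ∑ i, a i := Equiv.sum_comp (Equiv.addRight (1 : ZMod k)) a
  have hdouble : ∀ x : ZMod 2 × ZMod 2 × ZMod 2, x + x = 0 := by decide
  simp only [Fintype.sum_prod_type, Fintype.sum_bool, if_true, Bool.false_eq_true, if_false,
    Finset.sum_add_distrib, hshift]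
  exact hdouble _

/-- The sum of all eight elements of `(ℤ/2ℤ)³` is zero, so six distinct ones with sum zero would
leave two distinct ones with sum zero. -/
theorem sum_ne_zero_of_injective {ι : Type*} [Fintype ι] (hι : Fintype.card ι = 6)
    (f : ι → ZMod 2 × ZMod 2 × ZMod 2) (hf : Function.Injective f) : ∑ i, f i ≠ 0 := by
  intro h0
  have hcard : (Finset.univ.image f)ᶜ.card = 2 := by
    rw [Finset.card_compl, Finset.card_image_of_injective _ hf, Finset.card_univ, hι]
    rfl
  obtain ⟨x, y, hxy, hS⟩ := Finset.card_eq_two.mp hcard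
  have htotal := Finset.sum_add_sum_compl (Finset.univ.image f) id
  have hall : ∑ g : ZMod 2 × ZMod 2 × ZMod 2, id g = 0 := by decide
  rw [hS, Finset.sum_pair hxy, Finset.sum_image hf.injOn, hall] at htotal
  simp only [id, h0, zero_add] at htotal
  have hchar : ∀ u v : ZMod 2 × ZMod 2 × ZMod 2, u + v = 0 → u = v := by decide
  exact hxy (hchar x y htotal)

/-- Coloring the edge `uv` of the complete bipartite graph with both parts `(ℤ/2ℤ)³` by
`u + v` gives a proper edge-coloring of `K_{8,8}` using all 8 colors with no multicolored
6-cycle. -/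
theorem stmt_12 :
    ProperColoring (fun u v : ZMod 2 × ZMod 2 × ZMod 2 => u + v) ∧
    Set.range (fun p : (ZMod 2 × ZMod 2 × ZMod 2) × (ZMod 2 × ZMod 2 × ZMod 2) =>
      p.1 + p.2) = Set.univ ∧
    Fintype.card (ZMod 2 × ZMod 2 × ZMod 2) = 8 ∧
    ¬ HasRainbowCycle2k 3 (fun u v : ZMod 2 × ZMod 2 × ZMod 2 => u + v) := by
  refine ⟨⟨fun v => add_right_injective v, fun w => add_left_injective w⟩, ?_, rfl, ?_⟩
  · exact Set.eq_univ_of_forall fun g => ⟨(g, 0), add_zero g⟩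
  · rintro ⟨a, b, -, -, h⟩
    exact sum_ne_zero_of_injective rfl _ h (sum_cycle_colors a b)
end

section
/- There exists a proper edge-coloring of K_{3,7} using at most 7 colors that contains no multicolored cycle of length 6 (i.e., (3,7) ∈ FMC(6)). -/
/-- The coloring of `K_{3,7}`: three rows of the Klein four-group table on the columns `0, …, 3`,
and the table of `ℤ/3` in the colors `4, 5, 6` on the columns `4, 5, 6`. -/
def fmcColoring : Fin 3 → Fin 7 → Fin 7 :=
  ![![0, 1, 2, 3, 4, 5, 6],
    ![1, 0, 3, 2, 5, 6, 4],
    ![2, 3, 0, 1, 6, 4, 5]]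

theorem fmcColoring_proper : ProperColoring fmcColoring := by
  constructor
  · unfold Function.Injective
    decide
  · unfold Function.Injective
    decide

/-- The path `r₁ - x - r₂ - y - r₃` through two columns of the same block is never rainbow. Equal
colors on adjacent edges are excluded by properness, so the repetition is between one of the three
pairs of nonadjacent edges. -/
theorem fmcColoring_two_columns :
    ∀ r₁ r₂ r₃ : Fin 3, r₁ ≠ r₂ → r₂ ≠ r₃ → r₁ ≠ r₃ →
    ∀ x y : Fin 7, x ≠ y → (x < 4 ↔ y < 4) →
      fmcColoring r₁ x = fmcColoring r₂ y ∨ fmcColoring r₁ x = fmcColoring r₃ y ∨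
        fmcColoring r₂ x = fmcColoring r₃ y := by
  decide

/-- There is a proper edge-coloring of `K_{3,7}` using at most 7 colors with no multicolored
6-cycle, i.e. `(3, 7) ∈ FMC(6)`. -/
theorem stmt_13 :
    ∃ c : Fin 3 → Fin 7 → Fin 7, ProperColoring c ∧ ¬ HasRainbowCycle2k 3 c := by
  refine ⟨fmcColoring, fmcColoring_proper, ?_⟩
  rintro ⟨a, b, ha, hb, hc⟩
  obtain ⟨i, hi⟩ : ∃ i : ZMod 3, (b i < 4 ↔ b (i + 1) < 4) := by
    by_contra! h
    have h0 := h 0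
    have h1 := h 1
    have h2 := h 2
    rw [show (0 : ZMod 3) + 1 = 1 from rfl] at h0
    rw [show (1 : ZMod 3) + 1 = 2 from rfl] at h1
    rw [show (2 : ZMod 3) + 1 = 0 from rfl] at h2
    grind
  have hd : ∀ i : ZMod 3, i ≠ i + 1 ∧ i + 1 ≠ i + 1 + 1 ∧ i ≠ i + 1 + 1 := by decide
  obtain ⟨h01, h12, h02⟩ := hd i
  rcases fmcColoring_two_columns (a i) (a (i + 1)) (a (i + 1 + 1))
    (ha.ne h01) (ha.ne h12) (ha.ne h02) (b i) (b (i + 1)) (hb.ne h01) hi with h | h | h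
  · exact h01 (congrArg Prod.fst (@hc (i, true) (i + 1, true) (by simpa using h)))
  · exact h01 (congrArg Prod.fst (@hc (i, true) (i + 1, false) (by simpa using h)))
  · exact h01 (congrArg Prod.fst (@hc (i, false) (i + 1, false) (by simpa using h)))
end

section
/- Let K_{3,7} have partite sets A of size 3 and B of size 7, and let c be a proper edge-coloring of K_{3,7} using at most 7 colors in which no cycle of length 6 is multicolored. For each vertex b in B, let C(b) denote the set of colors appearing on the three edges incident to b. Then there exist two distinct vertices b, b′ in B with C(b) ∩ C(b′) = ∅. -/
/-- If all color sets meet pairwise, then two distinct vertices `b, b'` of `B` have exactly one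
coincidence of colors. -/
lemma coincidence_unique (c : Fin 3 → Fin 7 → Fin 7) (hc : ProperColoring c)
    (hmeet : ∀ b b' : Fin 7, b ≠ b' → ∃ i j, c i b = c j b')
    {b b' : Fin 7} (hb : b ≠ b') {i j i' j' : Fin 3}
    (h : c i b = c j b') (h' : c i' b = c j' b') : i = i' ∧ j = j' := by
  have hne : ∀ {x : Fin 7} {k l : Fin 3}, b ≠ x → c k b = c l x → k ≠ l := by
    rintro x k _ hx hk rfl
    exact hx (hc.1 k hk)
  choose f g hfg using fun x : {x : Fin 7 // b ≠ x} => hmeet b x x.2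
  let ψ : {x : Fin 7 // b ≠ x} → {q : Fin 3 × Fin 3 // q.1 ≠ q.2} :=
    fun x => ⟨(f x, g x), hne x.2 (hfg x)⟩
  have hψ : Function.Injective ψ := by
    intro x y hxy
    have h1 : f x = f y := congrArg (fun q => q.1.1) hxy
    have h2 : g x = g y := congrArg (fun q => q.1.2) hxy
    have hx := hfg x
    rw [h1, h2, hfg y] at hx
    exact Subtype.ext (hc.1 _ hx).symm
  have hcard : Fintype.card {x : Fin 7 // b ≠ x} =
      Fintype.card {q : Fin 3 × Fin 3 // q.1 ≠ q.2} :=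
    (show ∀ b : Fin 7, Fintype.card {x : Fin 7 // b ≠ x} =
      Fintype.card {q : Fin 3 × Fin 3 // q.1 ≠ q.2} by decide) b
  have hsurj := ((Fintype.bijective_iff_injective_and_card ψ).2 ⟨hψ, hcard⟩).2
  -- By surjectivity, every coincidence between `b` and `b'` is the one chosen by `ψ`.
  have key : ∀ k l, c k b = c l b' → f ⟨b', hb⟩ = k ∧ g ⟨b', hb⟩ = l := by
    intro k l hkl
    obtain ⟨x, hx⟩ := hsurj ⟨(k, l), hne hb hkl⟩
    have h1 : f x = k := congrArg (fun q => q.1.1) hx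
    have h2 : g x = l := congrArg (fun q => q.1.2) hx
    have hxx := hfg x
    rw [h1, h2, hkl] at hxx
    have : x = ⟨b', hb⟩ := Subtype.ext (hc.1 _ hxx).symm
    subst this
    exact ⟨h1, h2⟩
  exact ⟨(key i j h).1.symm.trans (key i' j' h').1, (key i j h).2.symm.trans (key i' j' h').2⟩

/-- If a proper edge-coloring of `K_{3,7}` using at most 7 colors has no multicolored 6-cycle,
then there are two distinct vertices `b, b'` of `B` whose incident color sets are disjoint. -/
theorem stmt_15 (c : Fin 3 → Fin 7 → Fin 7) (hc : ProperColoring c)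
    (hnr : ¬ HasRainbowCycle2k 3 c) :
    ∃ b b' : Fin 7, b ≠ b' ∧
      (Set.range fun a : Fin 3 => c a b) ∩ (Set.range fun a : Fin 3 => c a b') = ∅ := by
  by_contra hno
  have hmeet : ∀ b b' : Fin 7, b ≠ b' → ∃ i j, c i b = c j b' := by
    intro b b' hb
    by_contra hij
    push Not at hij
    refine hno ⟨b, b', hb, Set.eq_empty_iff_forall_notMem.2 ?_⟩
    rintro _ ⟨⟨i, rfl⟩, ⟨j, hj⟩⟩
    exact hij i j hj.symm
  -- Row `k + 2` is the row that the cycle skips at `b k`; there the color is `p = 0`.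
  have hp : ∀ k : Fin 3, ∃ x, c (k + 2) x = 0 := fun k =>
    Finite.surjective_of_injective (hc.1 (k + 2)) 0
  choose b hb using hp
  have hbinj : Function.Injective b := by
    intro k l hkl
    have h : c (k + 2) (b k) = c (l + 2) (b k) := by rw [hb k, hkl, hb l]
    exact add_right_cancel (hc.2 _ h)
  have main : ∀ k l r s : Fin 3, r ≠ k + 2 → c r (b k) = c s (b l) → k = l ∧ r = s := by
    intro k l r s hr h
    by_cases hkl : k = l
    · subst hkl
      exact ⟨rfl, hc.2 _ h⟩
    · exact absurd (coincidence_unique c hc hmeet (hbinj.ne hkl) h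
        ((hb k).trans (hb l).symm)).1 hr
  refine hnr ⟨fun i => (i : Fin 3), b, fun _ _ h => h, hbinj, ?_⟩
  have hrow : ∀ q : Fin 3 × Bool, (if q.2 then q.1 else q.1 + 1) ≠ q.1 + 2 := by decide
  have hinj : ∀ q q' : Fin 3 × Bool, q.1 = q'.1 →
      (if q.2 then q.1 else q.1 + 1) = (if q'.2 then q'.1 else q'.1 + 1) → q = q' := by decide
  intro (q : Fin 3 × Bool) (q' : Fin 3 × Bool) h
  have h' : c (if q.2 then q.1 else q.1 + 1) (b q.1) =
      c (if q'.2 then q'.1 else q'.1 + 1) (b q'.1) := by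
    rw [apply_ite c, apply_ite c, ite_apply, ite_apply]
    exact h
  obtain ⟨h1, h2⟩ := main _ _ _ _ (hrow q) h'
  exact hinj q q' h1 h2
end

section
/- For every integer m with 4 ≤ m ≤ 7, every proper edge-coloring of K_{m,7} using at most 7 colors contains a multicolored cycle of length 6. -/
open Equiv

/-- Compatibility of the values `a = t x` and `b = t z` of a third row `t`, when the first two rows
are the identity and `s`: they differ, and no 6-cycle using column `y` and, in the third row, the
columns `x` and `z` is rainbow. The two lists are the edge colors of the two such cycles. Distinctness
of the columns need not be imposed, since `Nodup` forces it. -/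
def Compat (s : Fin 7 → Fin 7) (x z a b : Fin 7) : Prop :=
  a ≠ b ∧ ∀ y, ¬ [x, y, s y, s z, b, a].Nodup ∧ ¬ [z, y, s y, s x, a, b].Nodup

instance (s : Fin 7 → Fin 7) (x z a b : Fin 7) : Decidable (Compat s x z a b) := by
  unfold Compat; infer_instance

/-- Every third row `t = (t₀, …, t₆)` that differs everywhere from the identity and from `s`, and whose
values are pairwise compatible, satisfies `Q t₀`. The hypotheses on `tᵢ` come before the quantifier
over `tᵢ₊₁`, so that deciding this proposition is a backtracking search. -/
def Search (s : Fin 7 → Fin 7) (Q : Fin 7 → Prop) : Prop :=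
  ∀ t₀, t₀ ≠ 0 → t₀ ≠ s 0 →
  ∀ t₁, t₁ ≠ 1 → t₁ ≠ s 1 → Compat s 0 1 t₀ t₁ →
  ∀ t₂, t₂ ≠ 2 → t₂ ≠ s 2 → Compat s 0 2 t₀ t₂ → Compat s 1 2 t₁ t₂ →
  ∀ t₃, t₃ ≠ 3 → t₃ ≠ s 3 → Compat s 0 3 t₀ t₃ → Compat s 1 3 t₁ t₃ → Compat s 2 3 t₂ t₃ →
  ∀ t₄, t₄ ≠ 4 → t₄ ≠ s 4 → Compat s 0 4 t₀ t₄ → Compat s 1 4 t₁ t₄ → Compat s 2 4 t₂ t₄ →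
    Compat s 3 4 t₃ t₄ →
  ∀ t₅, t₅ ≠ 5 → t₅ ≠ s 5 → Compat s 0 5 t₀ t₅ → Compat s 1 5 t₁ t₅ → Compat s 2 5 t₂ t₅ →
    Compat s 3 5 t₃ t₅ → Compat s 4 5 t₄ t₅ →
  ∀ t₆, t₆ ≠ 6 → t₆ ≠ s 6 → Compat s 0 6 t₀ t₆ → Compat s 1 6 t₁ t₆ → Compat s 2 6 t₂ t₆ →
    Compat s 3 6 t₃ t₆ → Compat s 4 6 t₄ t₆ → Compat s 5 6 t₅ t₆ → Q t₀

set_option synthInstance.maxHeartbeats 400000 in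
set_option synthInstance.maxSize 2000 in
instance (s Q) [DecidablePred Q] : Decidable (Search s Q) := by
  unfold Search; infer_instance

/-- When the first row is the identity and the second is a 7-cycle, no third row avoids rainbow
6-cycles; the next two lemmas say the same for cycle types `5 + 2` and `4 + 3`. -/
theorem search_7 : Search ![1,2,3,4,5,6,0] (fun _ => False) := by decide +kernel

theorem search_52 : Search ![1,2,3,4,0,6,5] (fun _ => False) := by decide +kernel

theorem search_43 : Search ![1,2,3,0,5,6,4] (fun _ => False) := by decide +kernel

/-- In cycle type `3 + 2 + 2` every third row without rainbow 6-cycle takes the value `2` in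
column `0`. -/
theorem search_322 : Search ![1,2,0,4,3,6,5] (fun t => t = 2) := by decide +kernel

theorem search_apply {s t : Fin 7 → Fin 7} {Q : Fin 7 → Prop} (h : Search s Q)
    (ht : Function.Injective t) (h0 : ∀ x, t x ≠ x) (hs : ∀ x, t x ≠ s x)
    (hfree : ∀ x y z, ¬ [x, y, s y, s z, t z, t x].Nodup) : Q (t 0) := by
  have hC : ∀ x z, x ≠ z → Compat s x z (t x) (t z) := fun x z hxz =>
    ⟨fun e => hxz (ht e), fun y => ⟨hfree x y z, hfree z y x⟩⟩
  refine h (t 0) ?_ ?_ (t 1) ?_ ?_ ?_ (t 2) ?_ ?_ ?_ ?_ (t 3) ?_ ?_ ?_ ?_ ?_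
    (t 4) ?_ ?_ ?_ ?_ ?_ ?_ (t 5) ?_ ?_ ?_ ?_ ?_ ?_ ?_ (t 6) ?_ ?_ ?_ ?_ ?_ ?_ ?_ ?_ <;>
  first
    | exact h0 _
    | exact hs _
    | exact hC _ _ (by decide)

theorem partitions_seven (M : Multiset ℕ) (h2 : ∀ n ∈ M, 2 ≤ n) (hsum : M.sum = 7) :
    M = {7} ∨ M = {5, 2} ∨ M = {4, 3} ∨ M = {3, 2, 2} := by
  have hcard : M.card * 2 ≤ 7 := by
    have := Multiset.card_nsmul_le_sum h2
    rw [hsum] at this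
    simpa using this
  have : M.card = 0 ∨ M.card = 1 ∨ M.card = 2 ∨ M.card = 3 := by omega
  rcases this with h | h | h | h
  · rw [Multiset.card_eq_zero] at h
    simp [h] at hsum
  · obtain ⟨a, rfl⟩ := Multiset.card_eq_one.1 h
    left
    simpa using hsum
  · obtain ⟨a, b, rfl⟩ := Multiset.card_eq_two.1 h
    simp at h2 hsum
    have : a ≤ 5 := by omega
    obtain ⟨h2a, h2b⟩ := h2
    obtain rfl : b = 7 - a := by omega
    interval_cases a <;> decide
  · obtain ⟨a, b, d, rfl⟩ := Multiset.card_eq_three.1 h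
    simp at h2 hsum
    obtain ⟨h2a, h2b, h2d⟩ := h2
    have : a ≤ 3 := by omega
    have : b ≤ 3 := by omega
    obtain rfl : d = 7 - a - b := by omega
    interval_cases a <;> interval_cases b <;> first | decide | omega

theorem exists_conj_normal_form (g : Perm (Fin 7)) (hg : ∀ x, g x ≠ x) :
    ∃ p : Perm (Fin 7), ⇑(p⁻¹ * g * p) = ![1,2,3,4,5,6,0] ∨ ⇑(p⁻¹ * g * p) = ![1,2,3,4,0,6,5] ∨
      ⇑(p⁻¹ * g * p) = ![1,2,3,0,5,6,4] ∨ ⇑(p⁻¹ * g * p) = ![1,2,0,4,3,6,5] := by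
  have hsupp : g.support = Finset.univ := by
    ext x
    simp [hg x]
  have hsum : g.cycleType.sum = 7 := by simp [Perm.sum_cycleType, hsupp]
  have key : ∀ (σ : Perm (Fin 7)), g.cycleType = σ.cycleType →
      ∃ p : Perm (Fin 7), p⁻¹ * g * p = σ := by
    intro σ h
    obtain ⟨q, hq⟩ := isConj_iff.1 (Perm.isConj_iff_cycleType_eq.2 h)
    exact ⟨q⁻¹, by simpa using hq⟩
  rcases partitions_seven g.cycleType (fun n => Perm.two_le_of_mem_cycleType) hsum with h | h | h | h
  · obtain ⟨p, hp⟩ := key c[0,1,2,3,4,5,6] (h.trans (by decide +kernel))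
    exact ⟨p, Or.inl (by rw [hp]; decide)⟩
  · obtain ⟨p, hp⟩ := key (c[0,1,2,3,4] * c[5,6]) (h.trans (by decide +kernel))
    exact ⟨p, Or.inr (Or.inl (by rw [hp]; decide))⟩
  · obtain ⟨p, hp⟩ := key (c[0,1,2,3] * c[4,5,6]) (h.trans (by decide +kernel))
    exact ⟨p, Or.inr (Or.inr (Or.inl (by rw [hp]; decide)))⟩
  · obtain ⟨p, hp⟩ := key (c[0,1,2] * c[3,4] * c[5,6]) (h.trans (by decide +kernel))
    exact ⟨p, Or.inr (Or.inr (Or.inr (by rw [hp]; decide)))⟩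

/-- The listed colors are those of the closed walk `y - j - z - k - x - i - y`, up to the order
of traversal; their distinctness forces `x`, `y`, `z` to be distinct, so the walk is a cycle. -/
theorem hasRainbow_of_nodup {m : ℕ} (c : Fin m → Fin 7 → Fin 7) (i j k : Fin m)
    (hij : i ≠ j) (hik : i ≠ k) (hjk : j ≠ k) (x y z : Fin 7)
    (h : [c i x, c i y, c j y, c j z, c k z, c k x].Nodup) : HasRainbowCycle2k 3 c := by
  have hxy : x ≠ y := by rintro rfl; simp at h
  have hyz : y ≠ z := by rintro rfl; simp at h
  have hxz : x ≠ z := by rintro rfl; simp at h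
  refine ⟨(![i, j, k] : Fin 3 → Fin m), (![y, z, x] : Fin 3 → Fin 7), ?_, ?_, ?_⟩
  · change Function.Injective (![i, j, k] : Fin 3 → Fin m)
    intro u v
    fin_cases u <;> fin_cases v <;> simp [hij, hik, hjk, hij.symm, hik.symm, hjk.symm]
  · change Function.Injective (![y, z, x] : Fin 3 → Fin 7)
    intro u v
    fin_cases u <;> fin_cases v <;> simp [hxy, hyz, hxz, hxy.symm, hyz.symm, hxz.symm]
  · change Function.Injective (fun p : Fin 3 × Bool =>
      if p.2 then c (![i, j, k] p.1) (![y, z, x] p.1)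
      else c (![i, j, k] (p.1 + 1)) (![y, z, x] p.1))
    rintro ⟨u, e⟩ ⟨v, f⟩
    simp at h
    fin_cases u <;> fin_cases v <;> cases e <;> cases f <;> simp <;> grind

/-- For every `4 ≤ m ≤ 7`, every proper edge-coloring of `K_{m,7}` using at most 7 colors
contains a multicolored 6-cycle. -/
theorem stmt_16 (m : ℕ) (hm4 : 4 ≤ m) (hm7 : m ≤ 7)
    (c : Fin m → Fin 7 → Fin 7) (hc : ProperColoring c) :
    HasRainbowCycle2k 3 c := by
  by_contra hno
  obtain ⟨hrow, hcol⟩ := hc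
  let r : Fin m → Perm (Fin 7) := fun i =>
    Equiv.ofBijective (c i) (Finite.injective_iff_bijective.1 (hrow i))
  have hr : ∀ i x, r i x = c i x := fun _ _ => rfl
  have hne : ∀ i j x, i ≠ j → r i x ≠ r j x := fun i j x hij e => hij (hcol x e)
  let i₀ : Fin m := ⟨0, by omega⟩
  let i₁ : Fin m := ⟨1, by omega⟩
  let i₂ : Fin m := ⟨2, by omega⟩
  let i₃ : Fin m := ⟨3, by omega⟩
  have h01 : i₀ ≠ i₁ := by simp [i₀, i₁]
  have h12 : i₁ ≠ i₂ := by simp [i₁, i₂]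
  have h13 : i₁ ≠ i₃ := by simp [i₁, i₃]
  have h02 : i₀ ≠ i₂ := by simp [i₀, i₂]
  have h03 : i₀ ≠ i₃ := by simp [i₀, i₃]
  have h23 : i₂ ≠ i₃ := by simp [i₂, i₃]
  obtain ⟨p, hp⟩ := exists_conj_normal_form ((r i₀)⁻¹ * r i₁) (fun x e => by
    rw [Perm.mul_apply, Perm.inv_eq_iff_eq] at e
    exact hne i₀ i₁ x h01 e.symm)
  -- `T i` is row `i` after the relabelling `p` of the columns and `(r i₀ * p)⁻¹` of the colors.
  let T : Fin m → Perm (Fin 7) := fun i => p⁻¹ * ((r i₀)⁻¹ * r i) * p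
  have hTr : ∀ i x, r i₀ (p (T i x)) = c i (p x) := by
    intro i x
    rw [← hr]
    simp [T]
  have hT0 : ∀ x, T i₀ x = x := by simp [T]
  have hTne : ∀ i j x, i ≠ j → T i x ≠ T j x := by
    intro i j x hij e
    apply hne i j (p x) hij
    rw [hr, hr, ← hTr, ← hTr, e]
  have hfree : ∀ k, i₀ ≠ k → i₁ ≠ k → ∀ x y z,
      ¬ [x, y, T i₁ y, T i₁ z, T k z, T k x].Nodup := by
    intro k h0 h1 x y z h
    apply hno
    apply hasRainbow_of_nodup c i₀ i₁ k h01 h0 h1 (p x) (p y) (p z)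
    have := h.map ((r i₀).injective.comp p.injective)
    simpa only [List.map_cons, List.map_nil, Function.comp_apply, hTr, hr] using this
  have main : ∀ Q : Fin 7 → Prop, Search (T i₁) Q → ∀ k, i₀ ≠ k → i₁ ≠ k → Q (T k 0) :=
    fun Q hQ k h0 h1 => search_apply hQ (T k).injective
      (fun x e => hTne i₀ k x h0 ((hT0 x).trans e.symm))
      (fun x => hTne k i₁ x h1.symm) (hfree k h0 h1)
  rcases hp with hp | hp | hp | hp <;> change ⇑(T i₁) = _ at hp
  · exact main _ (hp ▸ search_7) i₂ h02 h12
  · exact main _ (hp ▸ search_52) i₂ h02 h12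
  · exact main _ (hp ▸ search_43) i₂ h02 h12
  · have e₂ := main _ (hp ▸ search_322) i₂ h02 h12
    have e₃ := main _ (hp ▸ search_322) i₃ h03 h13
    exact hTne i₂ i₃ 0 h23 (e₂.trans e₃.symm)
end
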